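/- Existence of conditional typical subspace projectors. All Hilbert spaces are finite-dimensional and complex. A state on $H$ is a positive semidefinite operator on $H$ of trace one; $\mathcal S(H)$ is the set of states on $H$. Write $S(\rho) := -\mathrm{tr}(\rho\log_2\rho)$, and for a map $V : A \to \mathcal S(H)$ on a finite set $A$ (a classical-quantum channel) and a probability distribution $P$ on $A$ write $S(V|P) := \sum_{a\in A} P(a)\,S(V(a))$ and $V^{\otimes n}(x^n) := V(x_1)\otimes\cdots\otimes V(x_n)$ on $H^{\otimes n}$. A sequence $x^n \in A^n$ has type $P$ if every $b \in A$ occurs exactly $nP(b)$ times in it. For self-adjoint operators, $X \le Y$ means that $Y - X$ is positive semidefinite. There is a universal constant $K > 0$ such that for every finite set $A$ with $a := |A|$, every finite-dimensional complex Hilbert space $H$ with $d := \dim H$, every classical-quantum channel $V : A \to \mathcal S(H)$, every probability distribution $P$ on $A$, every $n \in \mathbb N$ with $n \ge 1$, every $\alpha > 0$, and every sequence $x^n \in A^n$ of type $P$, there exists an orthogonal projection $\Pi(x^n)$ on $H^{\otimes n}$ commuting with $V^{\otimes n}(x^n)$ and satisfying: (i) $\mathrm{tr}\big(V^{\otimes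 n}(x^n)\,\Pi(x^n)\big) \ge 1 - \frac{a d}{4\alpha^2}$; (ii) $\mathrm{tr}\big(\Pi(x^n)\big) \le 2^{\,n S(V|P) + K a d \alpha \sqrt n}$; (iii) $\Pi(x^n)\, V^{\otimes n}(x^n)\, \Pi(x^n) \le 2^{-n S(V|P) + K a d \alpha \sqrt n}\,\Pi(x^n)$. -/

import Mathlib

open scoped ComplexOrder MatrixOrder

noncomputable section

/-- A quantum state on the Hilbert space `ℂ^ι`: a positive semidefinite operator of trace one. -/
def IsState {ι : Type*} [Fintype ι] (ρ : Matrix ι ι ℂ) : Prop :=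
  ρ.PosSemidef ∧ ρ.trace = 1

/-- The von Neumann entropy `S(ρ) = -tr(ρ log₂ ρ)`, where `log₂ ρ` is given by the functional
calculus of the self-adjoint operator `ρ`. As `Real.logb 2 0 = 0`, the convention
`0 log₂ 0 = 0` holds. -/
def vnEntropy {ι : Type*} [Fintype ι] [DecidableEq ι] (ρ : Matrix ι ι ℂ) : ℝ :=
  -(ρ * cfc (Real.logb 2) ρ).trace.re

/-- The conditional entropy `S(V|P) = ∑ₐ P(a) S(V(a))` of a classical-quantum channel. -/
def condEntropy {A ι : Type*} [Fintype A] [Fintype ι] [DecidableEq ι]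
    (V : A → Matrix ι ι ℂ) (P : A → ℝ) : ℝ :=
  ∑ a, P a * vnEntropy (V a)

/-- The `n`-fold extension `V^{⊗n}(xⁿ) = V(x₁) ⊗ ⋯ ⊗ V(xₙ)` of a classical-quantum channel.
The space `(ℂ^ι)^{⊗n}` is `ℂ^(Fin n → ι)`, through the basis of product vectors
`e_{i₁} ⊗ ⋯ ⊗ e_{iₙ}`. -/
def cqPow {A ι : Type*} (V : A → Matrix ι ι ℂ) {n : ℕ} (x : Fin n → A) :
    Matrix (Fin n → ι) (Fin n → ι) ℂ :=
  Matrix.of fun i j => ∏ k, V (x k) (i k) (j k)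

/-- The sequence `xⁿ` has type `P`: every letter `a` occurs exactly `n P(a)` times in it. -/
def HasType {A : Type*} [DecidableEq A] {n : ℕ} (x : Fin n → A) (P : A → ℝ) : Prop :=
  ∀ a : A, ((Finset.univ.filter fun k => x k = a).card : ℝ) = n * P a

end

open scoped ComplexOrder MatrixOrder

section ProductDistribution

variable {κ ι : Type*} [Fintype κ] [DecidableEq κ] [Fintype ι] {w g : κ → ι → ℝ}

/-- The product of probability weights has total mass one. -/
lemma sum_prod_weights_eq_one (hw : ∀ k, ∑ i, w k i = 1) :
    ∑ j : κ → ι, ∏ k, w k (j k) = 1 := by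
  classical
  rw [← Fintype.prod_sum]
  simp [hw]

/-- Independent centered variables are uncorrelated. -/
lemma sum_prod_weights_mul_mul_eq_zero (hg : ∀ k, ∑ i, w k i * g k i = 0) {k l : κ}
    (hkl : k ≠ l) :
    ∑ j : κ → ι, (∏ m, w m (j m)) * (g k (j k) * g l (j l)) = 0 := by
  classical
  have key : ∀ j : κ → ι, (∏ m, w m (j m)) * (g k (j k) * g l (j l)) =
      ∏ m, (w m (j m) * ((if m = k then g m (j m) else 1) *
        (if m = l then g m (j m) else 1))) := by
    intro j
    simp only [Finset.prod_mul_distrib, Finset.prod_ite_eq', Finset.mem_univ, if_true]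
  simp_rw [key]
  rw [← Fintype.prod_sum
    (f := fun m i => w m i * ((if m = k then g m i else 1) * (if m = l then g m i else 1)))]
  refine Finset.prod_eq_zero (Finset.mem_univ k) ?_
  simpa [hkl] using hg k

/-- A function of one coordinate has its marginal expectation. -/
lemma sum_prod_weights_mul (hw : ∀ k, ∑ i, w k i = 1) (k : κ) (f : ι → ℝ) :
    ∑ j : κ → ι, (∏ m, w m (j m)) * f (j k) = ∑ i, w k i * f i := by
  classical
  have key : ∀ j : κ → ι, (∏ m, w m (j m)) * f (j k) =
      ∏ m, (w m (j m) * (if m = k then f (j m) else 1)) := by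
    intro j
    simp only [Finset.prod_mul_distrib, Finset.prod_ite_eq', Finset.mem_univ, if_true]
  simp_rw [key]
  rw [← Fintype.prod_sum (f := fun m i => w m i * (if m = k then f i else 1)),
    Finset.prod_eq_single k]
  · simp
  · intro m _ hm
    simp [hm, hw]
  · simp

/-- The variance of a sum of independent centered variables is the sum of the variances. -/
lemma sum_prod_weights_mul_sq (hw : ∀ k, ∑ i, w k i = 1) (hg : ∀ k, ∑ i, w k i * g k i = 0) :
    ∑ j : κ → ι, (∏ m, w m (j m)) * (∑ k, g k (j k)) ^ 2 = ∑ k, ∑ i, w k i * g k i ^ 2 := by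
  simp_rw [sq (∑ k, g k _), Finset.sum_mul_sum, Finset.mul_sum]
  rw [Finset.sum_comm]
  refine Finset.sum_congr rfl fun k _ => ?_
  rw [Finset.sum_comm, Finset.sum_eq_single k]
  · simp_rw [← sq]
    exact sum_prod_weights_mul hw k fun i => g k i ^ 2
  · intro l _ hl
    exact sum_prod_weights_mul_mul_eq_zero hg hl.symm
  · simp

/-- Centering does not increase the second moment. -/
lemma sum_weights_mul_sub_mean_sq_le {p f : ι → ℝ} (hp : ∑ i, p i = 1) :
    ∑ i, p i * (f i - ∑ j, p j * f j) ^ 2 ≤ ∑ i, p i * f i ^ 2 := by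
  set m := ∑ j, p j * f j with hm
  have h : ∑ i, p i * (f i - m) ^ 2 = ∑ i, p i * f i ^ 2 - m ^ 2 := by
    calc ∑ i, p i * (f i - m) ^ 2
        = ∑ i, (p i * f i ^ 2 - 2 * m * (p i * f i) + m ^ 2 * p i) :=
          Finset.sum_congr rfl fun i _ => by ring
      _ = _ := by
          rw [Finset.sum_add_distrib, Finset.sum_sub_distrib, ← Finset.mul_sum, ← Finset.mul_sum,
            hp, ← hm]
          ring
  rw [h]
  linarith [sq_nonneg m]

/-- Chebyshev's inequality for a sum of independent variables. -/
lemma sum_prod_weights_filter_lt_abs_le {f : κ → ι → ℝ} {C L : ℝ} (hw₀ : ∀ k i, 0 ≤ w k i)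
    (hw : ∀ k, ∑ i, w k i = 1) (hf : ∀ k, ∑ i, w k i * f k i ^ 2 ≤ C) (hL : 0 < L) :
    ∑ j : κ → ι with L < |∑ k, f k (j k) - ∑ k, ∑ i, w k i * f k i|, ∏ k, w k (j k) ≤
      Fintype.card κ * C / L ^ 2 := by
  have hvar := sum_prod_weights_mul_sq (w := w) (g := fun k i => f k i - ∑ i, w k i * f k i) hw
    fun k => by
      simp_rw [mul_sub]
      rw [Finset.sum_sub_distrib, ← Finset.sum_mul, hw, one_mul, sub_self]
  have hle : ∑ k, ∑ i, w k i * (f k i - ∑ i, w k i * f k i) ^ 2 ≤ Fintype.card κ * C := by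
    calc _ ≤ ∑ _k : κ, C := Finset.sum_le_sum fun k _ =>
          (sum_weights_mul_sub_mean_sq_le (hw k)).trans (hf k)
      _ = _ := by simp
  have hq : ∀ j : κ → ι, 0 ≤ ∏ k, w k (j k) := fun j => Finset.prod_nonneg fun k _ => hw₀ k _
  rw [le_div_iff₀ (by positivity), Finset.sum_mul]
  refine le_trans ?_ (hvar.trans_le hle)
  refine le_trans (Finset.sum_le_sum fun j hj => ?_)
    (Finset.sum_le_univ_sum_of_nonneg fun j => mul_nonneg (hq j) (sq_nonneg _))
  refine mul_le_mul_of_nonneg_left ?_ (hq j)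
  rw [Finset.sum_sub_distrib, ← sq_abs (∑ k, f k (j k) - _)]
  exact pow_le_pow_left₀ hL.le (Finset.mem_filter.1 hj).2.le 2

end ProductDistribution

lemma mul_logb_two_sq_le {t : ℝ} (h₀ : 0 ≤ t) (h₁ : t ≤ 1) : t * Real.logb 2 t ^ 2 ≤ 9 := by
  rcases h₀.eq_or_lt with rfl | ht
  · simp
  have h := (Real.abs_log_mul_self_rpow_lt t (1 / 2) ht h₁ (by norm_num)).le
  have hsq : t * Real.log t ^ 2 ≤ 4 := by
    have h2 := pow_le_pow_left₀ (abs_nonneg _) h 2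
    rw [sq_abs, mul_pow, ← Real.sqrt_eq_rpow, Real.sq_sqrt h₀] at h2
    norm_num at h2
    linarith
  have hlog : (0.69 : ℝ) < Real.log 2 := by linarith [Real.log_two_gt_d9]
  rw [Real.logb, div_pow, ← mul_div_assoc, div_le_iff₀ (by positivity)]
  nlinarith

lemma prod_weights_eq_two_rpow {κ ι : Type*} [Fintype κ] {w : κ → ι → ℝ} {j : κ → ι}
    (hj : ∀ k, 0 < w k (j k)) :
    ∏ k, w k (j k) = (2 : ℝ) ^ (-∑ k, -Real.logb 2 (w k (j k))) := by
  rw [Finset.sum_neg_distrib, neg_neg, Real.rpow_sum_of_pos two_pos]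
  exact Finset.prod_congr rfl fun k _ =>
    (Real.rpow_logb two_pos (by norm_num) (hj k)).symm

lemma chebyshev_error_le {a d n α : ℝ} (ha : 1 ≤ a) (hd : 1 ≤ d) (hn : 1 ≤ n) (hα : 0 < α) :
    1 - a * d / (4 * α ^ 2) ≤ 1 - n * (9 * d) / (6 * a * d * α * √n) ^ 2 := by
  have hbound : n * (9 * d) / (6 * a * d * α * √n) ^ 2 = 1 / (a ^ 2 * d) / (4 * α ^ 2) := by
    rw [mul_pow, Real.sq_sqrt (by positivity)]
    field_simp
    norm_num
  rw [hbound]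
  gcongr
  rw [div_le_iff₀ (by positivity)]
  exact one_le_mul_of_one_le_of_one_le (one_le_mul_of_one_le_of_one_le ha hd)
    (one_le_mul_of_one_le_of_one_le (one_le_pow₀ ha) hd)

section Typicality

variable {κ ι : Type*} [Fintype κ] [Fintype ι]

/-- The sequences of positive probability whose surprisal is within `L` of the entropy. -/
def typicalSeqs (w : κ → ι → ℝ) (L : ℝ) : Set (κ → ι) :=
  {j | (∀ k, 0 < w k (j k)) ∧
    |∑ k, -Real.logb 2 (w k (j k)) - ∑ k, ∑ i, w k i * -Real.logb 2 (w k i)| ≤ L}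

variable {w : κ → ι → ℝ} {L : ℝ}

lemma prod_weights_le_of_mem_typicalSeqs {j : κ → ι} (hj : j ∈ typicalSeqs w L) :
    ∏ k, w k (j k) ≤ (2 : ℝ) ^ (-(∑ k, ∑ i, w k i * -Real.logb 2 (w k i)) + L) := by
  rw [prod_weights_eq_two_rpow hj.1]
  refine Real.rpow_le_rpow_of_exponent_le one_le_two ?_
  linarith [(abs_le.1 hj.2).1]

lemma le_prod_weights_of_mem_typicalSeqs {j : κ → ι} (hj : j ∈ typicalSeqs w L) :
    (2 : ℝ) ^ (-(∑ k, ∑ i, w k i * -Real.logb 2 (w k i) + L)) ≤ ∏ k, w k (j k) := by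
  rw [prod_weights_eq_two_rpow hj.1]
  refine Real.rpow_le_rpow_of_exponent_le one_le_two ?_
  linarith [(abs_le.1 hj.2).2]

open Classical in
lemma card_typicalSeqs_le [DecidableEq κ] (hw₀ : ∀ k i, 0 ≤ w k i)
    (hw : ∀ k, ∑ i, w k i = 1) :
    ((Finset.univ.filter (· ∈ typicalSeqs w L)).card : ℝ) ≤
      (2 : ℝ) ^ (∑ k, ∑ i, w k i * -Real.logb 2 (w k i) + L) := by
  set s := ∑ k, ∑ i, w k i * -Real.logb 2 (w k i) + L with hs
  have h : ((Finset.univ.filter (· ∈ typicalSeqs w L)).card : ℝ) * (2 : ℝ) ^ (-s) ≤ 1 := by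
    rw [← nsmul_eq_mul, ← sum_prod_weights_eq_one hw, ← Finset.sum_const]
    refine (Finset.sum_le_sum fun j hj =>
      le_prod_weights_of_mem_typicalSeqs (Finset.mem_filter.1 hj).2).trans ?_
    exact Finset.sum_le_univ_sum_of_nonneg fun j => Finset.prod_nonneg fun k _ => hw₀ k _
  rwa [Real.rpow_neg two_pos.le, ← div_eq_mul_inv, div_le_one (by positivity)] at h

open Classical in
lemma one_sub_le_sum_typicalSeqs [DecidableEq κ] (hw₀ : ∀ k i, 0 ≤ w k i)
    (hw : ∀ k, ∑ i, w k i = 1) (hL : 0 < L) :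
    1 - Fintype.card κ * (9 * Fintype.card ι) / L ^ 2 ≤
      ∑ j with j ∈ typicalSeqs w L, ∏ k, w k (j k) := by
  have hq : ∀ j : κ → ι, 0 ≤ ∏ k, w k (j k) := fun j => Finset.prod_nonneg fun k _ => hw₀ k _
  have hmom : ∀ k, ∑ i, w k i * (-Real.logb 2 (w k i)) ^ 2 ≤ 9 * Fintype.card ι := by
    intro k
    calc _ ≤ ∑ _i : ι, (9 : ℝ) := Finset.sum_le_sum fun i _ => by
          rw [neg_sq]
          refine mul_logb_two_sq_le (hw₀ k i) ?_
          rw [← hw k]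
          exact Finset.single_le_sum (fun i _ => hw₀ k i) (Finset.mem_univ i)
      _ = _ := by simp [mul_comm]
  have hcheb := sum_prod_weights_filter_lt_abs_le hw₀ hw hmom hL
  have hsplit := Finset.sum_filter_add_sum_filter_not Finset.univ (· ∈ typicalSeqs w L)
    fun j => ∏ k, w k (j k)
  rw [sum_prod_weights_eq_one hw] at hsplit
  have hle : ∑ j with j ∉ typicalSeqs w L, ∏ k, w k (j k) ≤
      ∑ j : κ → ι with L < |∑ k, -Real.logb 2 (w k (j k)) -
        ∑ k, ∑ i, w k i * -Real.logb 2 (w k i)|, ∏ k, w k (j k) := by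
    rw [Finset.sum_filter, Finset.sum_filter]
    refine Finset.sum_le_sum fun j _ => ?_
    by_cases h₁ : j ∈ typicalSeqs w L
    · rw [if_neg (not_not.2 h₁)]
      split_ifs
      exacts [hq j, le_rfl]
    rw [if_pos h₁]
    split_ifs with h₂
    · exact le_rfl
    · have hzero : ¬ ∀ k, 0 < w k (j k) := fun h => h₁ ⟨h, not_lt.1 h₂⟩
      push Not at hzero
      obtain ⟨k, hk⟩ := hzero
      exact (Finset.prod_eq_zero (Finset.mem_univ k) (le_antisymm hk (hw₀ k _))).le
  linarith

end Typicality

section MatrixLemmas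

open Matrix

variable {A ι : Type*} {n : ℕ} (x : Fin n → A)

lemma cqPow_mul [Fintype ι] (V W : A → Matrix ι ι ℂ) :
    cqPow V x * cqPow W x = cqPow (fun a => V a * W a) x := by
  classical
  ext i j
  simp only [cqPow, Matrix.mul_apply, Matrix.of_apply, ← Finset.prod_mul_distrib]
  rw [Fintype.prod_sum]

lemma cqPow_conjTranspose (V : A → Matrix ι ι ℂ) :
    (cqPow V x)ᴴ = cqPow (fun a => (V a)ᴴ) x := by
  ext i j
  simp [cqPow, Matrix.conjTranspose_apply]

lemma cqPow_diagonal [DecidableEq ι] (v : A → ι → ℂ) :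
    cqPow (fun a => diagonal (v a)) x = diagonal fun j : Fin n → ι => ∏ k, v (x k) (j k) := by
  ext i j
  by_cases h : i = j
  · subst h
    simp [cqPow]
  · obtain ⟨k, hk⟩ := Function.ne_iff.1 h
    rw [diagonal_apply_ne _ h]
    exact Finset.prod_eq_zero (Finset.mem_univ k) (diagonal_apply_ne _ hk)

lemma cqPow_one [DecidableEq ι] :
    cqPow (fun _ : A => (1 : Matrix ι ι ℂ)) x = 1 := by
  simp_rw [← diagonal_one]
  rw [cqPow_diagonal]
  simp

variable [Fintype ι] [DecidableEq ι]

lemma Matrix.IsHermitian.eq_unitary_mul_diagonal {ρ : Matrix ι ι ℂ} (h : ρ.IsHermitian) :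
    ρ = (h.eigenvectorUnitary : Matrix ι ι ℂ) * diagonal (fun i => (h.eigenvalues i : ℂ)) *
      (h.eigenvectorUnitary : Matrix ι ι ℂ)ᴴ := by
  conv_lhs => rw [h.spectral_theorem]
  rfl

lemma vnEntropy_eq_sum {ρ : Matrix ι ι ℂ} (h : ρ.IsHermitian) :
    vnEntropy ρ = ∑ i, h.eigenvalues i * -Real.logb 2 (h.eigenvalues i) := by
  have hU : (h.eigenvectorUnitary : Matrix ι ι ℂ)ᴴ * (h.eigenvectorUnitary : Matrix ι ι ℂ) = 1 :=
    Unitary.coe_star_mul_self _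
  have hcfc : cfc (Real.logb 2) ρ = (h.eigenvectorUnitary : Matrix ι ι ℂ) *
      diagonal (fun i => (Real.logb 2 (h.eigenvalues i) : ℂ)) *
        (h.eigenvectorUnitary : Matrix ι ι ℂ)ᴴ := by
    rw [h.cfc_eq]
    rfl
  have hprod : ρ * cfc (Real.logb 2) ρ = (h.eigenvectorUnitary : Matrix ι ι ℂ) *
      diagonal (fun i => (h.eigenvalues i : ℂ) * (Real.logb 2 (h.eigenvalues i) : ℂ)) *
        (h.eigenvectorUnitary : Matrix ι ι ℂ)ᴴ := by
    rw [hcfc]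
    conv_lhs => enter [1]; rw [h.eq_unitary_mul_diagonal]
    rw [← diagonal_mul_diagonal]
    simp only [Matrix.mul_assoc]
    rw [← Matrix.mul_assoc _ᴴ, hU, Matrix.one_mul]
  rw [vnEntropy, hprod, Matrix.trace_mul_comm, ← Matrix.mul_assoc, hU, Matrix.one_mul,
    trace_diagonal, Complex.re_sum]
  simp [← Complex.ofReal_mul]

lemma IsState.sum_eigenvalues {ρ : Matrix ι ι ℂ} (h : IsState ρ) :
    ∑ i, h.1.1.eigenvalues i = 1 := by
  have htr := h.2.symm.trans h.1.1.trace_eq_sum_eigenvalues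
  refine Complex.ofReal_injective ?_
  rw [Complex.ofReal_sum, Complex.ofReal_one]
  exact htr.symm

lemma IsState.nonempty {ρ : Matrix ι ι ℂ} (h : IsState ρ) : Nonempty ι := by
  by_contra hne
  rw [not_nonempty_iff] at hne
  simpa using h.sum_eigenvalues

/-- The product of the eigenvector unitaries diagonalizes the product state. -/
lemma exists_unitary_cqPow_eq {V : A → Matrix ι ι ℂ} (hV : ∀ a, IsState (V a)) :
    ∃ W : Matrix (Fin n → ι) (Fin n → ι) ℂ, Wᴴ * W = 1 ∧
      cqPow V x = W * diagonal (fun j => ((∏ k, (hV (x k)).1.1.eigenvalues (j k) : ℝ) : ℂ)) *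
        Wᴴ := by
  refine ⟨cqPow (fun a => ((hV a).1.1.eigenvectorUnitary : Matrix ι ι ℂ)) x, ?_, ?_⟩
  · rw [cqPow_conjTranspose, cqPow_mul, ← cqPow_one (A := A) x]
    congr 1
    ext1 a
    exact Unitary.coe_star_mul_self _
  · simp_rw [Complex.ofReal_prod]
    rw [← cqPow_diagonal x fun a i => ((hV a).1.1.eigenvalues i : ℂ), cqPow_conjTranspose,
      cqPow_mul, cqPow_mul]
    congr 1
    ext1 a
    exact (hV a).1.1.eq_unitary_mul_diagonal

/-- The entropies along a sequence of type `P` add up to `n S(V|P)`. -/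
lemma HasType.sum_vnEntropy [Fintype A] [DecidableEq A] {x : Fin n → A} {P : A → ℝ}
    (hx : HasType x P) (V : A → Matrix ι ι ℂ) :
    ∑ k, vnEntropy (V (x k)) = n * condEntropy V P := by
  rw [condEntropy, Finset.mul_sum,
    ← Finset.sum_fiberwise_of_maps_to (fun k _ => Finset.mem_univ (x k))]
  refine Finset.sum_congr rfl fun a _ => ?_
  rw [← mul_assoc, ← hx a, ← nsmul_eq_mul, ← Finset.sum_const]
  exact Finset.sum_congr rfl fun k hk => by rw [(Finset.mem_filter.1 hk).2]

open Classical in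
/-- The spectral projection of `W diag(q) Wᴴ` onto the eigenvectors indexed by `T`. -/
lemma exists_spectral_projection {σ : Type*} [Fintype σ] [DecidableEq σ]
    {W ρ : Matrix σ σ ℂ} {q : σ → ℝ} (hW : Wᴴ * W = 1)
    (hρ : ρ = W * diagonal (fun j => (q j : ℂ)) * Wᴴ) (T : Set σ) {c : ℝ}
    (hc : ∀ j ∈ T, q j ≤ c) :
    ∃ E : Matrix σ σ ℂ, IsStarProjection E ∧ Commute E ρ ∧
      (ρ * E).trace.re = ∑ j with j ∈ T, q j ∧
      E.trace.re = (Finset.univ.filter (· ∈ T)).card ∧ E * ρ * E ≤ c • E := by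
  have hmul : ∀ u v : σ → ℂ, W * diagonal u * Wᴴ * (W * diagonal v * Wᴴ) =
      W * diagonal (fun j => u j * v j) * Wᴴ := by
    intro u v
    rw [← diagonal_mul_diagonal]
    simp only [Matrix.mul_assoc]
    rw [← Matrix.mul_assoc Wᴴ, hW, Matrix.one_mul]
  have htr : ∀ u : σ → ℂ, (W * diagonal u * Wᴴ).trace = ∑ j, u j := by
    intro u
    rw [Matrix.trace_mul_comm, ← Matrix.mul_assoc, hW, Matrix.one_mul, trace_diagonal]
  refine ⟨W * diagonal (fun j => if j ∈ T then 1 else 0) * Wᴴ, ⟨?_, ?_⟩, ?_, ?_, ?_, ?_⟩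
  · rw [IsIdempotentElem, hmul]
    congr 3
    ext j
    by_cases h : j ∈ T <;> simp [h]
  · rw [IsSelfAdjoint, star_eq_conjTranspose, conjTranspose_mul, conjTranspose_mul,
      conjTranspose_conjTranspose, diagonal_conjTranspose, Matrix.mul_assoc]
    congr 3
    ext j
    by_cases h : j ∈ T <;> simp [h]
  · rw [Commute, SemiconjBy, hρ, hmul, hmul]
    simp_rw [mul_comm]
  · rw [hρ, hmul, htr, Complex.re_sum, Finset.sum_filter]
    refine Finset.sum_congr rfl fun j _ => ?_
    by_cases h : j ∈ T <;> simp [h]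
  · rw [htr]
    simp
  · rw [hρ, hmul, hmul, Matrix.le_iff, ← Matrix.smul_mul, ← Matrix.mul_smul, ← Matrix.sub_mul,
      ← Matrix.mul_sub, ← diagonal_smul, diagonal_sub]
    refine PosSemidef.mul_mul_conjTranspose_same (PosSemidef.diagonal fun j => ?_) W
    by_cases h : j ∈ T
    · simpa [h] using hc j h
    · simp [h]

end MatrixLemmas

/-- Existence of conditional typical subspace projectors. Operators are matrices with respect to
an orthonormal basis of `H`, indexed by a finite type `ι` with `d = |ι|`, and `≤` between
matrices is the Loewner order. -/
theorem conditional_typical_projector :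
    ∃ K : ℝ, 0 < K ∧
      ∀ (A : Type*) [Fintype A] [DecidableEq A] (ι : Type*) [Fintype ι] [DecidableEq ι]
        (V : A → Matrix ι ι ℂ), (∀ a, IsState (V a)) →
      ∀ P : A → ℝ, P ∈ stdSimplex ℝ A →
      ∀ n : ℕ, 1 ≤ n → ∀ α : ℝ, 0 < α →
      ∀ x : Fin n → A, HasType x P →
      ∃ E : Matrix (Fin n → ι) (Fin n → ι) ℂ,
        IsStarProjection E ∧
        Commute E (cqPow V x) ∧
        1 - (Fintype.card A : ℝ) * (Fintype.card ι : ℝ) / (4 * α ^ 2) ≤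
          (cqPow V x * E).trace.re ∧
        E.trace.re ≤
          (2 : ℝ) ^ ((n : ℝ) * condEntropy V P +
            K * (Fintype.card A : ℝ) * (Fintype.card ι : ℝ) * α * √(n : ℝ)) ∧
        E * cqPow V x * E ≤
          (2 : ℝ) ^ (-((n : ℝ) * condEntropy V P) +
            K * (Fintype.card A : ℝ) * (Fintype.card ι : ℝ) * α * √(n : ℝ)) • E := by
  refine ⟨6, by norm_num, ?_⟩
  intro A _ _ ι _ _ V hV P hP n hn α hα x hx
  have hA : 0 < Fintype.card A := Fintype.card_pos_iff.2 ⟨x ⟨0, hn⟩⟩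
  have hι : 0 < Fintype.card ι := Fintype.card_pos_iff.2 (hV (x ⟨0, hn⟩)).nonempty
  have hA_one : (1 : ℝ) ≤ Fintype.card A := by exact_mod_cast hA
  have hι_one : (1 : ℝ) ≤ Fintype.card ι := by exact_mod_cast hι
  have hn_one : (1 : ℝ) ≤ n := by exact_mod_cast hn
  set L : ℝ := 6 * (Fintype.card A : ℝ) * (Fintype.card ι : ℝ) * α * √(n : ℝ) with hL
  have hLpos : 0 < L := by positivity
  let w : Fin n → ι → ℝ := fun k => (hV (x k)).1.1.eigenvalues
  have hw₀ : ∀ k i, 0 ≤ w k i := fun k i => (hV (x k)).1.eigenvalues_nonneg i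
  have hw : ∀ k, ∑ i, w k i = 1 := fun k => (hV (x k)).sum_eigenvalues
  have hS : ∑ k, ∑ i, w k i * -Real.logb 2 (w k i) = n * condEntropy V P := by
    rw [← hx.sum_vnEntropy V]
    exact Finset.sum_congr rfl fun k _ => (vnEntropy_eq_sum (hV (x k)).1.1).symm
  obtain ⟨W, hW, hρ⟩ := exists_unitary_cqPow_eq x hV
  obtain ⟨E, hE, hcomm, hmass, hcard, hle⟩ := exists_spectral_projection hW hρ (typicalSeqs w L)
    fun j hj => prod_weights_le_of_mem_typicalSeqs hj
  rw [hS] at hle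
  refine ⟨E, hE, hcomm, ?_, ?_, hle⟩
  · rw [hmass]
    refine le_trans ?_ (one_sub_le_sum_typicalSeqs hw₀ hw hLpos)
    rw [Fintype.card_fin]
    exact chebyshev_error_le hA_one hι_one hn_one hα
  · rw [hcard, ← hS]
    exact card_typicalSeqs_le hw₀ hw
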